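/- arXiv:1412.7817 — 2 statements merged into one kernel-verified Lean document; each statement's English description precedes it below -/
import Mathlib

section
/- Let d be a positive integer and let V and W be nonempty homogeneous varieties in the open unit ball B_d of C^d. Then V and W are biholomorphically equivalent if and only if there exists an invertible linear map A on C^d such that A(W) = V. -/
open Metric

/-- `V` is a homogeneous variety in the open unit ball of `ℂ^d`: the common zero set in the
ball of a set of homogeneous polynomials. -/
def IsHomogeneousVariety (d : ℕ) (V : Set (EuclideanSpace ℂ (Fin d))) : Prop :=
  ∃ S : Set (MvPolynomial (Fin d) ℂ),
    (∀ p ∈ S, ∃ n : ℕ, p.IsHomogeneous n) ∧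
    V = {z : EuclideanSpace ℂ (Fin d) |
          z ∈ ball (0 : EuclideanSpace ℂ (Fin d)) 1 ∧
          ∀ p ∈ S, MvPolynomial.eval (fun i => z i) p = 0}

/-- `V` and `W` are biholomorphically equivalent subsets of the open unit ball of `ℂ^d`. -/
def AreBiholomorphic (d : ℕ) (V W : Set (EuclideanSpace ℂ (Fin d))) : Prop :=
  ∃ F G : EuclideanSpace ℂ (Fin d) → EuclideanSpace ℂ (Fin d),
    DifferentiableOn ℂ F (ball 0 1) ∧ DifferentiableOn ℂ G (ball 0 1) ∧
    F '' V = W ∧ (∀ z ∈ V, G (F z) = z) ∧ (∀ w ∈ W, F (G w) = w)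

/-!
By the Schwarz lemma, a biholomorphism `F` between cones in the ball with `F 0 = 0` preserves norms,
so equality holds in the Schwarz lemma along every complex line of the cone. Hence `F` is
homogeneous there and coincides with its derivative at `0`.

If `F 0 ≠ 0`, the same argument, after a Möbius change of variable, shows that `F` maps the unit
disc through `F⁻¹ 0` onto the unit disc through `F 0` by the involution `φ` of the disc exchanging
`0` and `r = ‖F 0‖ = ‖F⁻¹ 0‖`. As `|φ (μ r)| = r` for some unimodular `μ`, inserting rotations
between `F`, `F⁻¹` and `F` produces a biholomorphism of the cones that fixes the origin.
-/

open Set Complex NormedSpace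
open scoped ComplexConjugate

section Algebra

theorem eval_smul_of_isHomogeneous {σ R : Type*} [CommSemiring R] {p : MvPolynomial σ R} {n : ℕ}
    (hp : p.IsHomogeneous n) (c : R) (x : σ → R) :
    MvPolynomial.eval (c • x) p = c ^ n * MvPolynomial.eval x p := by
  rw [MvPolynomial.eval_eq, MvPolynomial.eval_eq, Finset.mul_sum]
  refine Finset.sum_congr rfl fun m hm => ?_
  have hdeg : ∑ i ∈ m.support, m i = n := hp.degree_eq_sum_deg_support hm |>.symm
  simp only [Pi.smul_apply, smul_eq_mul, mul_pow, Finset.prod_mul_distrib,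
    Finset.prod_pow_eq_pow_sum, hdeg]
  ring

theorem exists_linearEquiv_eqOn_of_leftInvOn {K E : Type*} [Field K] [AddCommGroup E] [Module K E]
    {W : Set E} [FiniteDimensional K (Submodule.span K W)] {L M : E →ₗ[K] E}
    (h : LeftInvOn L M W) : ∃ A : E ≃ₗ[K] E, EqOn A M W := by
  have hspan : LeftInvOn L M (Submodule.span K W) :=
    LinearMap.eqOn_span (f := L ∘ₗ M) (g := LinearMap.id) h
  have hinj : Function.Injective (M.domRestrict (Submodule.span K W)) :=
    hspan.injOn.injective
  obtain ⟨A, hA⟩ := Submodule.exists_linearEquiv_restrict_eq (LinearEquiv.ofInjective _ hinj)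
  exact ⟨A, fun w hw => (hA ⟨w, Submodule.subset_span hw⟩).symm⟩

end Algebra

section SchwarzLemma

variable {E : Type*} [NormedAddCommGroup E] [NormedSpace ℂ E] [StrictConvexSpace ℝ E]

theorem eqOn_smul_of_schwarz_eq {f : ℂ → E} (hd : DifferentiableOn ℂ f (ball 0 1))
    (hmaps : MapsTo f (ball 0 1) (closedBall 0 1)) (h0 : f 0 = 0) {z₀ : ℂ}
    (hz₀ : z₀ ∈ ball (0 : ℂ) 1) (hne : z₀ ≠ 0) (heq : ‖f z₀‖ = ‖z₀‖) :
    EqOn f (fun z => (z / z₀) • f z₀) (ball 0 1) := by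
  have hslope : dslope f 0 z₀ = z₀⁻¹ • f z₀ := by
    rw [dslope_of_ne _ hne, slope_def_module, h0, sub_zero, sub_zero]
  have hnorm : ‖dslope f 0 z₀‖ = 1 / 1 := by
    rw [hslope, norm_smul, heq, norm_inv, inv_mul_cancel₀ (norm_ne_zero_iff.2 hne), div_one]
  intro z hz
  rw [affine_of_mapsTo_ball_of_norm_dslope_eq_div hd (by rwa [h0]) hz₀ hnorm hz]
  simp only [h0, hslope, sub_zero, zero_add, smul_smul, div_eq_mul_inv]

end SchwarzLemma

section DiscInvolution

/-- The Möbius involution of the open unit disc that exchanges `0` and `a`. -/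
noncomputable def discInvolution (a ζ : ℂ) : ℂ := (a - ζ) / (1 - conj a * ζ)

variable {a ζ : ℂ}

@[simp]
theorem discInvolution_zero_right (a : ℂ) : discInvolution a 0 = a := by
  simp [discInvolution]

@[simp]
theorem discInvolution_self (a : ℂ) : discInvolution a a = 0 := by
  simp [discInvolution]

theorem one_sub_conj_mul_ne_zero (ha : ‖a‖ < 1) (hζ : ‖ζ‖ ≤ 1) : 1 - conj a * ζ ≠ 0 := by
  refine sub_ne_zero.2 fun h => ?_
  have hlt : ‖conj a * ζ‖ < 1 := by
    rw [norm_mul, norm_conj]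
    exact mul_lt_one_of_nonneg_of_lt_one_left (norm_nonneg a) ha hζ
  rw [← h, norm_one] at hlt
  exact lt_irrefl 1 hlt

theorem normSq_one_sub_conj_mul_sub_normSq_sub (a ζ : ℂ) :
    normSq (1 - conj a * ζ) - normSq (a - ζ) = (1 - normSq a) * (1 - normSq ζ) := by
  simp only [normSq_apply, sub_re, sub_im, one_re, one_im, mul_re, mul_im, conj_re, conj_im]
  ring

theorem mapsTo_discInvolution (ha : ‖a‖ < 1) :
    MapsTo (discInvolution a) (ball 0 1) (ball 0 1) := by
  intro ζ hζ
  rw [mem_ball_zero_iff] at hζ ⊢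
  have hden := one_sub_conj_mul_ne_zero ha hζ.le
  rw [discInvolution, norm_div, div_lt_one (norm_pos_iff.2 hden),
    ← sq_lt_sq₀ (norm_nonneg _) (norm_nonneg _), ← normSq_eq_norm_sq, ← normSq_eq_norm_sq,
    ← sub_pos, normSq_one_sub_conj_mul_sub_normSq_sub, normSq_eq_norm_sq, normSq_eq_norm_sq]
  exact mul_pos (sub_pos.2 (pow_lt_one₀ (norm_nonneg a) ha two_ne_zero))
    (sub_pos.2 (pow_lt_one₀ (norm_nonneg ζ) hζ two_ne_zero))

theorem differentiableOn_discInvolution (ha : ‖a‖ < 1) :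
    DifferentiableOn ℂ (discInvolution a) (ball 0 1) := by
  refine DifferentiableOn.div (by fun_prop) (by fun_prop) fun ζ hζ => ?_
  exact one_sub_conj_mul_ne_zero ha (mem_ball_zero_iff.1 hζ).le

theorem norm_le_norm_discInvolution_neg_self (ha : ‖a‖ < 1) : ‖a‖ ≤ ‖discInvolution a (-a)‖ := by
  have hvalue : discInvolution a (-a) = 2 * a / ((1 + ‖a‖ ^ 2 : ℝ) : ℂ) := by
    rw [discInvolution, mul_neg, conj_mul']
    push_cast
    ring
  rw [hvalue, norm_div, norm_mul, norm_real, Real.norm_of_nonneg (by positivity),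
    le_div_iff₀ (by positivity), Complex.norm_ofNat]
  nlinarith [norm_nonneg a, mul_nonneg (norm_nonneg a) (sub_nonneg.2 ha.le)]

-- `|discInvolution a (μ * a)|` vanishes at `μ = 1` and is at least `|a|` at `μ = -1`.
theorem exists_norm_discInvolution_mul_self_eq (ha : ‖a‖ < 1) :
    ∃ μ : ℂ, ‖μ‖ = 1 ∧ ‖discInvolution a (μ * a)‖ = ‖a‖ := by
  have hconn : IsPreconnected (sphere (0 : ℂ) 1) :=
    isPreconnected_sphere (by rw [rank_real_complex]; exact Nat.one_lt_ofNat) 0 1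
  have hcont : ContinuousOn (fun μ : ℂ => ‖discInvolution a (μ * a)‖) (sphere 0 1) := by
    refine (ContinuousOn.div (by fun_prop) (by fun_prop) fun μ hμ => ?_).norm
    refine one_sub_conj_mul_ne_zero ha ?_
    rw [norm_mul, mem_sphere_zero_iff_norm.1 hμ, one_mul]
    exact ha.le
  have hone : (1 : ℂ) ∈ sphere (0 : ℂ) 1 := by simp
  have hneg : (-1 : ℂ) ∈ sphere (0 : ℂ) 1 := by simp
  obtain ⟨μ, hμ, hval⟩ := hconn.intermediate_value hone hneg hcont
    (show ‖a‖ ∈ Icc _ _ from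
      ⟨by simp, by simpa using norm_le_norm_discInvolution_neg_self ha⟩)
  exact ⟨μ, mem_sphere_zero_iff_norm.1 hμ, hval⟩

end DiscInvolution

section BallCone

variable {E : Type*} [NormedAddCommGroup E] [NormedSpace ℂ E] {V : Set E}

/-- `V` is the intersection of the open unit ball with a nonempty complex cone, that is, with a
set stable under multiplication by complex scalars. -/
structure IsBallCone (V : Set E) : Prop where
  subset_ball : V ⊆ ball 0 1
  zero_mem : 0 ∈ V
  smul_mem : ∀ ⦃v⦄, v ∈ V → ∀ c : ℂ, ‖c • v‖ < 1 → c • v ∈ V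

theorem IsHomogeneousVariety.smul_mem {d : ℕ} {V : Set (EuclideanSpace ℂ (Fin d))}
    (hV : IsHomogeneousVariety d V) {v : EuclideanSpace ℂ (Fin d)} (hv : v ∈ V) {c : ℂ}
    (hc : ‖c • v‖ < 1) : c • v ∈ V := by
  obtain ⟨S, hS, rfl⟩ := hV
  refine ⟨mem_ball_zero_iff.2 hc, fun p hp => ?_⟩
  obtain ⟨n, hn⟩ := hS p hp
  exact (eval_smul_of_isHomogeneous hn c fun i => v i).trans (by rw [hv.2 p hp, mul_zero])

theorem IsHomogeneousVariety.isBallCone {d : ℕ} {V : Set (EuclideanSpace ℂ (Fin d))}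
    (hV : IsHomogeneousVariety d V) (hne : V.Nonempty) : IsBallCone V where
  subset_ball := by
    obtain ⟨S, -, rfl⟩ := hV
    exact fun v hv => hv.1
  zero_mem := by
    obtain ⟨v, hv⟩ := hne
    simpa only [zero_smul] using hV.smul_mem (c := 0) hv (by simp)
  smul_mem _ hv _ hc := hV.smul_mem hv hc

namespace IsBallCone

theorem norm_lt_one (hV : IsBallCone V) {v : E} (hv : v ∈ V) : ‖v‖ < 1 :=
  mem_ball_zero_iff.1 (hV.subset_ball hv)

theorem smul_normalize_mem (hV : IsBallCone V) {v : E} (hv : v ∈ V) {ζ : ℂ}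
    (hζ : ζ ∈ ball (0 : ℂ) 1) : ζ • normalize v ∈ V := by
  have hle : ‖normalize v‖ ≤ 1 := by
    rw [NormedSpace.normalize, norm_smul, norm_inv, norm_norm]
    exact inv_mul_le_one
  have hlt : ‖ζ • normalize v‖ < 1 := by
    rw [norm_smul]
    exact mul_lt_one_of_nonneg_of_lt_one_left (norm_nonneg ζ) (mem_ball_zero_iff.1 hζ) hle
  have hcoe : ζ • normalize v = (ζ * (‖v‖⁻¹ : ℝ)) • v := by
    rw [NormedSpace.normalize, mul_smul, Complex.coe_smul]
  rw [hcoe] at hlt ⊢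
  exact hV.smul_mem hv _ hlt

end IsBallCone

theorem coe_norm_smul_normalize (v : E) : (‖v‖ : ℂ) • normalize v = v := by
  rw [Complex.coe_smul, norm_smul_normalize]

end BallCone

section BiholomorphicPair

variable {E E₁ E₂ : Type*} [NormedAddCommGroup E] [NormedSpace ℂ E]
  [NormedAddCommGroup E₁] [NormedSpace ℂ E₁] [NormedAddCommGroup E₂] [NormedSpace ℂ E₂]

/-- `F` and `G` restrict to mutually inverse maps between `V` and `W` and are holomorphic at the
points of these sets. Differentiability is only required there, and not on a fixed ball, so that
such pairs can be composed. -/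
structure IsBiholomorphicPair (F : E → E₁) (G : E₁ → E) (V : Set E) (W : Set E₁) : Prop where
  differentiableAt_left : ∀ ⦃v⦄, v ∈ V → DifferentiableAt ℂ F v
  differentiableAt_right : ∀ ⦃w⦄, w ∈ W → DifferentiableAt ℂ G w
  mapsTo_left : MapsTo F V W
  mapsTo_right : MapsTo G W V
  invOn : InvOn G F V W

theorem IsBallCone.isBiholomorphicPair_smul {V : Set E} (hV : IsBallCone V) {c : ℂ}
    (hc : ‖c‖ = 1) : IsBiholomorphicPair (c • · : E → E) (c⁻¹ • ·) V V := by
  have hc0 : c ≠ 0 := norm_ne_zero_iff.1 (by simp [hc])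
  have hmaps : ∀ {b : ℂ}, ‖b‖ = 1 → MapsTo (b • · : E → E) V V := fun hb v hv =>
    hV.smul_mem hv _ (by rw [norm_smul, hb, one_mul]; exact hV.norm_lt_one hv)
  exact ⟨fun v _ => by fun_prop, fun v _ => by fun_prop, hmaps hc,
    hmaps (by rw [norm_inv, hc, inv_one]), fun v _ => inv_smul_smul₀ hc0 v,
    fun v _ => smul_inv_smul₀ hc0 v⟩

namespace IsBiholomorphicPair

variable {F : E → E₁} {G : E₁ → E} {V : Set E} {W : Set E₁}

theorem of_differentiableOn {U : Set E} {U' : Set E₁} (hU : IsOpen U) (hU' : IsOpen U')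
    (hV : V ⊆ U) (hW : W ⊆ U') (hF : DifferentiableOn ℂ F U) (hG : DifferentiableOn ℂ G U')
    (himage : F '' V = W) (hinv : InvOn G F V W) : IsBiholomorphicPair F G V W where
  differentiableAt_left v hv := hF.differentiableAt (hU.mem_nhds (hV hv))
  differentiableAt_right w hw := hG.differentiableAt (hU'.mem_nhds (hW hw))
  mapsTo_left := mapsTo_iff_image_subset.2 himage.subset
  mapsTo_right := by
    rw [← himage, mapsTo_image_iff]
    intro v hv
    rwa [Function.comp_apply, hinv.1 hv]
  invOn := hinv

theorem symm (h : IsBiholomorphicPair F G V W) : IsBiholomorphicPair G F W V :=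
  ⟨h.differentiableAt_right, h.differentiableAt_left, h.mapsTo_right, h.mapsTo_left, h.invOn.symm⟩

theorem trans {F' : E₁ → E₂} {G' : E₂ → E₁} {X : Set E₂} (h : IsBiholomorphicPair F G V W)
    (h' : IsBiholomorphicPair F' G' W X) : IsBiholomorphicPair (F' ∘ F) (G ∘ G') V X where
  differentiableAt_left v hv :=
    (h'.differentiableAt_left (h.mapsTo_left hv)).comp v (h.differentiableAt_left hv)
  differentiableAt_right x hx :=
    (h.differentiableAt_right (h'.mapsTo_right hx)).comp x (h'.differentiableAt_right hx)
  mapsTo_left := h'.mapsTo_left.comp h.mapsTo_left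
  mapsTo_right := h.mapsTo_right.comp h'.mapsTo_right
  invOn := h.invOn.comp h'.invOn h.mapsTo_left h'.mapsTo_right

theorem right_zero (h : IsBiholomorphicPair F G V W) (hV : IsBallCone V) (h0 : F 0 = 0) :
    G 0 = 0 := by
  simpa only [h0] using h.invOn.1 hV.zero_mem

theorem differentiableOn_disc (h : IsBiholomorphicPair F G V W) (hV : IsBallCone V) {v : E}
    (hv : v ∈ V) : DifferentiableOn ℂ (fun ζ : ℂ => F (ζ • normalize v)) (ball 0 1) :=
  fun ζ hζ => (DifferentiableAt.comp (f := fun ζ : ℂ => ζ • normalize v) ζ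
    (h.differentiableAt_left (hV.smul_normalize_mem hv hζ)) (by fun_prop)).differentiableWithinAt

theorem mapsTo_disc (h : IsBiholomorphicPair F G V W) (hV : IsBallCone V) (hW : IsBallCone W)
    {v : E} (hv : v ∈ V) :
    MapsTo (fun ζ : ℂ => F (ζ • normalize v)) (ball 0 1) (closedBall 0 1) := fun _ hζ =>
  ball_subset_closedBall (hW.subset_ball (h.mapsTo_left (hV.smul_normalize_mem hv hζ)))

section FixesOrigin

theorem norm_apply_le (h : IsBiholomorphicPair F G V W) (hV : IsBallCone V) (hW : IsBallCone W)
    (h0 : F 0 = 0) {v : E} (hv : v ∈ V) : ‖F v‖ ≤ ‖v‖ := by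
  have hschwarz := norm_le_norm_of_mapsTo_ball (z := (‖v‖ : ℂ)) (h.differentiableOn_disc hV hv)
    (h.mapsTo_disc hV hW hv) (by rw [zero_smul, h0]) (by simpa using hV.norm_lt_one hv)
  simpa only [coe_norm_smul_normalize, norm_real, norm_norm] using hschwarz

theorem norm_apply (h : IsBiholomorphicPair F G V W) (hV : IsBallCone V) (hW : IsBallCone W)
    (h0 : F 0 = 0) {v : E} (hv : v ∈ V) : ‖F v‖ = ‖v‖ := by
  refine le_antisymm (h.norm_apply_le hV hW h0 hv) ?_
  simpa only [h.invOn.1 hv] using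
    h.symm.norm_apply_le hW hV (h.right_zero hV h0) (h.mapsTo_left hv)

variable [StrictConvexSpace ℝ E₁]

theorem apply_smul (h : IsBiholomorphicPair F G V W) (hV : IsBallCone V) (hW : IsBallCone W)
    (h0 : F 0 = 0) {v : E} (hv : v ∈ V) {c : ℂ} (hc : ‖c • v‖ < 1) : F (c • v) = c • F v := by
  rcases eq_or_ne v 0 with rfl | hv0
  · rw [smul_zero, h0, smul_zero]
  have hne : (‖v‖ : ℂ) ≠ 0 := ofReal_ne_zero.2 (norm_ne_zero_iff.2 hv0)
  have hdisc := eqOn_smul_of_schwarz_eq (z₀ := (‖v‖ : ℂ)) (h.differentiableOn_disc hV hv)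
    (h.mapsTo_disc hV hW hv) (by rw [zero_smul, h0]) (by simpa using hV.norm_lt_one hv) hne
    (by rw [coe_norm_smul_normalize, h.norm_apply hV hW h0 hv, norm_real, norm_norm])
  have hmem : c * ‖v‖ ∈ ball (0 : ℂ) 1 := by simpa [norm_smul] using hc
  simpa only [mul_smul, coe_norm_smul_normalize, mul_div_cancel_right₀ c hne] using hdisc hmem

theorem fderiv_zero_apply (h : IsBiholomorphicPair F G V W) (hV : IsBallCone V)
    (hW : IsBallCone W) (h0 : F 0 = 0) {v : E} (hv : v ∈ V) : fderiv ℂ F 0 v = F v := by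
  have hsmall : ∀ᶠ c : ℂ in nhds 0, ‖c • v‖ < 1 :=
    ContinuousAt.eventually_lt (by fun_prop) continuousAt_const (by simp)
  have hline : HasLineDerivAt ℂ F (F v) 0 v := by
    have hlin : HasDerivAt (fun c : ℂ => c • F v) (F v) 0 := by
      simpa using (hasDerivAt_id (0 : ℂ)).smul_const (F v)
    refine hlin.congr_of_eventuallyEq (hsmall.mono fun c hc => ?_)
    simpa only [zero_add] using h.apply_smul hV hW h0 hv hc
  rw [← (h.differentiableAt_left hV.zero_mem).lineDeriv_eq_fderiv, hline.lineDeriv]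

end FixesOrigin

section MovesOrigin

theorem differentiableOn_discInvolution_disc (h : IsBiholomorphicPair F G V W)
    (hV : IsBallCone V) {v : E} (hv : v ∈ V) :
    DifferentiableOn ℂ (fun ζ => F (discInvolution ‖v‖ ζ • normalize v)) (ball 0 1) := by
  have hnorm : ‖(‖v‖ : ℂ)‖ < 1 := by simpa using hV.norm_lt_one hv
  exact (h.differentiableOn_disc hV hv).comp (differentiableOn_discInvolution hnorm)
    (mapsTo_discInvolution hnorm)

theorem mapsTo_discInvolution_disc (h : IsBiholomorphicPair F G V W) (hV : IsBallCone V)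
    (hW : IsBallCone W) {v : E} (hv : v ∈ V) :
    MapsTo (fun ζ => F (discInvolution ‖v‖ ζ • normalize v)) (ball 0 1) (closedBall 0 1) :=
  (h.mapsTo_disc hV hW hv).comp (mapsTo_discInvolution (by simpa using hV.norm_lt_one hv))

theorem apply_discInvolution_zero (h : IsBiholomorphicPair F G V W) (hW : IsBallCone W) :
    F (discInvolution ‖G 0‖ 0 • normalize (G 0)) = 0 := by
  rw [discInvolution_zero_right, coe_norm_smul_normalize, h.invOn.2 hW.zero_mem]

theorem norm_apply_zero_le (h : IsBiholomorphicPair F G V W) (hV : IsBallCone V)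
    (hW : IsBallCone W) : ‖F 0‖ ≤ ‖G 0‖ := by
  have ha : G 0 ∈ V := h.mapsTo_right hW.zero_mem
  have hschwarz := norm_le_norm_of_mapsTo_ball (z := (‖G 0‖ : ℂ))
    (h.differentiableOn_discInvolution_disc hV ha) (h.mapsTo_discInvolution_disc hV hW ha)
    (h.apply_discInvolution_zero hW) (by simpa using hV.norm_lt_one ha)
  simpa only [discInvolution_self, zero_smul, norm_real, norm_norm] using hschwarz

theorem norm_apply_zero (h : IsBiholomorphicPair F G V W) (hV : IsBallCone V)
    (hW : IsBallCone W) : ‖F 0‖ = ‖G 0‖ :=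
  le_antisymm (h.norm_apply_zero_le hV hW) (h.symm.norm_apply_zero_le hW hV)

variable [StrictConvexSpace ℝ E₁]

theorem apply_discInvolution (h : IsBiholomorphicPair F G V W) (hV : IsBallCone V)
    (hW : IsBallCone W) (hG0 : G 0 ≠ 0) {ζ : ℂ} (hζ : ζ ∈ ball (0 : ℂ) 1) :
    F (discInvolution ‖G 0‖ ζ • normalize (G 0)) = ζ • normalize (F 0) := by
  have ha : G 0 ∈ V := h.mapsTo_right hW.zero_mem
  have hdisc := eqOn_smul_of_schwarz_eq (z₀ := (‖G 0‖ : ℂ))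
    (h.differentiableOn_discInvolution_disc hV ha) (h.mapsTo_discInvolution_disc hV hW ha)
    (h.apply_discInvolution_zero hW) (by simpa using hV.norm_lt_one ha)
    (ofReal_ne_zero.2 (norm_ne_zero_iff.2 hG0))
    (by rw [discInvolution_self, zero_smul, h.norm_apply_zero hV hW, norm_real, norm_norm])
  have hnormalize : (ζ / ‖G 0‖) • F 0 = ζ • normalize (F 0) := by
    rw [NormedSpace.normalize, ← Complex.coe_smul, smul_smul, h.norm_apply_zero hV hW, ofReal_inv,
      div_eq_mul_inv]
  simpa only [discInvolution_self, zero_smul, hnormalize] using hdisc hζ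

theorem exists_apply_zero_eq_zero (h : IsBiholomorphicPair F G V W) (hV : IsBallCone V)
    (hW : IsBallCone W) :
    ∃ (F₀ : E → E₁) (G₀ : E₁ → E), IsBiholomorphicPair F₀ G₀ V W ∧ F₀ 0 = 0 := by
  rcases eq_or_ne (G 0) 0 with hG0 | hG0
  · exact ⟨F, G, h, h.symm.right_zero hW hG0⟩
  have ha : G 0 ∈ V := h.mapsTo_right hW.zero_mem
  set r : ℂ := (‖G 0‖ : ℂ) with hr
  have hr0 : r ≠ 0 := ofReal_ne_zero.2 (norm_ne_zero_iff.2 hG0)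
  have hr1 : ‖r‖ < 1 := by simpa [hr] using hV.norm_lt_one ha
  obtain ⟨μ, hμ, hφ⟩ := exists_norm_discInvolution_mul_self_eq hr1
  set φμ : ℂ := discInvolution r (μ * r)
  have hφ0 : φμ ≠ 0 := norm_ne_zero_iff.1 (by rw [hφ]; exact norm_ne_zero_iff.2 hr0)
  have hc : ‖r / φμ‖ = 1 := by rw [norm_div, hφ, div_self (norm_ne_zero_iff.2 hr0)]
  have hF0 : F 0 = r • normalize (F 0) := by
    rw [hr, ← h.norm_apply_zero hV hW, coe_norm_smul_normalize]
  have hGμ : G (μ • F 0) = φμ • normalize (G 0) := by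
    have hμr : μ * r ∈ ball (0 : ℂ) 1 := by simpa [hμ] using hr1
    have hφμ : φμ ∈ ball (0 : ℂ) 1 := mapsTo_discInvolution hr1 hμr
    rw [hF0, smul_smul, ← h.apply_discInvolution hV hW hG0 hμr]
    exact h.invOn.1 (hV.smul_normalize_mem ha hφμ)
  refine ⟨_, _, (((h.trans (hW.isBiholomorphicPair_smul hμ)).trans h.symm).trans
    (hV.isBiholomorphicPair_smul hc)).trans h, ?_⟩
  calc F ((r / φμ) • G (μ • F 0)) = F (G 0) := by
        rw [hGμ, smul_smul, div_mul_cancel₀ r hφ0, coe_norm_smul_normalize]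
    _ = 0 := h.invOn.2 hW.zero_mem

end MovesOrigin

theorem exists_linearEquiv [StrictConvexSpace ℝ E] {F G : E → E} {V W : Set E}
    [FiniteDimensional ℂ (Submodule.span ℂ W)] (h : IsBiholomorphicPair F G V W)
    (hV : IsBallCone V) (hW : IsBallCone W) : ∃ A : E ≃ₗ[ℂ] E, A '' W = V := by
  obtain ⟨F₀, G₀, h₀, hF₀⟩ := h.exists_apply_zero_eq_zero hV hW
  have hF₀lin : EqOn (fderiv ℂ F₀ 0) F₀ V := fun v hv => h₀.fderiv_zero_apply hV hW hF₀ hv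
  have hG₀lin : EqOn (fderiv ℂ G₀ 0) G₀ W := fun w hw =>
    h₀.symm.fderiv_zero_apply hW hV (h₀.right_zero hV hF₀) hw
  have hleft : LeftInvOn (fderiv ℂ F₀ 0) (fderiv ℂ G₀ 0) W := fun w hw => by
    rw [hG₀lin hw, hF₀lin (h₀.mapsTo_right hw), h₀.invOn.2 hw]
  obtain ⟨A, hA⟩ := exists_linearEquiv_eqOn_of_leftInvOn
    (L := (fderiv ℂ F₀ 0 : E →ₗ[ℂ] E)) (M := (fderiv ℂ G₀ 0 : E →ₗ[ℂ] E)) hleft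
  refine ⟨A, ?_⟩
  rw [(hA.trans hG₀lin).image_eq]
  exact (h₀.invOn.symm.bijOn h₀.mapsTo_right h₀.mapsTo_left).image_eq

end IsBiholomorphicPair

end BiholomorphicPair

theorem homogeneous_biholomorphic_iff_linear_general {E : Type*} [NormedAddCommGroup E]
    [NormedSpace ℂ E] [StrictConvexSpace ℝ E] [FiniteDimensional ℂ E] {V W : Set E}
    (hV : IsBallCone V) (hW : IsBallCone W) :
    (∃ F G : E → E, DifferentiableOn ℂ F (ball 0 1) ∧ DifferentiableOn ℂ G (ball 0 1) ∧
      F '' V = W ∧ (∀ z ∈ V, G (F z) = z) ∧ (∀ w ∈ W, F (G w) = w)) ↔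
      ∃ A : E ≃ₗ[ℂ] E, A '' W = V := by
  constructor
  · rintro ⟨F, G, hF, hG, himage, hGF, hFG⟩
    exact (IsBiholomorphicPair.of_differentiableOn isOpen_ball isOpen_ball hV.subset_ball
      hW.subset_ball hF hG himage ⟨hGF, hFG⟩).exists_linearEquiv hV hW
  · rintro ⟨A, rfl⟩
    exact ⟨A.symm, A, A.symm.toContinuousLinearEquiv.differentiable.differentiableOn,
      A.toContinuousLinearEquiv.differentiable.differentiableOn,
      A.toEquiv.symm_image_image W, fun z _ => A.apply_symm_apply z,
      fun w _ => A.symm_apply_apply w⟩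

/-- Two nonempty homogeneous varieties in the finite-dimensional unit ball are
biholomorphically equivalent if and only if an invertible linear map takes one onto the
other. -/
theorem homogeneous_biholomorphic_iff_linear (d : ℕ) (hd : 0 < d)
    (V W : Set (EuclideanSpace ℂ (Fin d))) (hV : IsHomogeneousVariety d V)
    (hW : IsHomogeneousVariety d W) (hVne : V.Nonempty) (hWne : W.Nonempty) :
    AreBiholomorphic d V W ↔
      ∃ A : EuclideanSpace ℂ (Fin d) ≃ₗ[ℂ] EuclideanSpace ℂ (Fin d), A '' W = V := by
  exact homogeneous_biholomorphic_iff_linear_general (hV.isBallCone hVne) (hW.isBallCone hWne)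
end

section
/- Let d be a positive integer, let V, W be subsets of the open unit ball B_d of C^d, and let F be an automorphism of B_d (a holomorphic bijection of B_d onto itself whose inverse is holomorphic) with F(W) = V. Then F maps aff(W) ∩ B_d onto aff(V) ∩ B_d, where aff denotes the affine hull, and the affine hulls aff(V) and aff(W) have the same dimension (and hence the same codimension in C^d). -/
open Metric

/-!
Composing `F` with the Möbius involution `φ` of the target ball that exchanges `0` and `F 0` gives
a biholomorphism of balls fixing `0`. By the Schwarz lemma it preserves the norm, and the equality
case of the Schwarz lemma on each complex line through `0` shows that it is the restriction of a
linear map `L`. Hence `F = φ ∘ L` is linear fractional on the ball. If `F = num / den` is linear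
fractional, then `den z • (F z - F w₀)` is a linear function of `z - w₀`; so, up to nonzero scalars,
an injective linear map carries differences `z - w₀` to differences `F z - F w₀`, and this linear
map transports affine hulls and their directions.
-/

open Set Topology

section LinearFractional

variable {𝕜 E E' E'' : Type*}

section Field

variable [Field 𝕜] [AddCommGroup E] [Module 𝕜 E] [AddCommGroup E'] [Module 𝕜 E']
  [AddCommGroup E''] [Module 𝕜 E'']

variable (𝕜) in
/-- `f` is linear fractional on `s`: there it is the quotient of an affine map by an affine
function without zeros in `s`. The quotient is written in multiplied-out form. -/
def IsLinearFractionalOn (f : E → E') (s : Set E) : Prop :=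
  ∃ (num : E →ᵃ[𝕜] E') (den : E →ᵃ[𝕜] 𝕜), ∀ z ∈ s, den z ≠ 0 ∧ den z • f z = num z

namespace IsLinearFractionalOn

theorem congr {f g : E → E'} {s : Set E} (hf : IsLinearFractionalOn 𝕜 f s) (hfg : EqOn f g s) :
    IsLinearFractionalOn 𝕜 g s := by
  obtain ⟨num, den, h⟩ := hf
  exact ⟨num, den, fun z hz ↦ hfg hz ▸ h z hz⟩

theorem comp_affineMap {f : E' → E''} {s : Set E} {t : Set E'} (hf : IsLinearFractionalOn 𝕜 f t)
    (L : E →ᵃ[𝕜] E') (hL : MapsTo L s t) : IsLinearFractionalOn 𝕜 (f ∘ L) s := by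
  obtain ⟨num, den, h⟩ := hf
  exact ⟨num.comp L, den.comp L, fun z hz ↦ h (L z) (hL hz)⟩

theorem exists_linearMap_sub_eq_smul {f : E → E'} {s : Set E} (hf : IsLinearFractionalOn 𝕜 f s)
    {w₀ : E} (hw₀ : w₀ ∈ s) :
    ∃ N : E →ₗ[𝕜] E', ∀ z ∈ s, ∃ c : 𝕜, c ≠ 0 ∧ N (z - w₀) = c • (f z - f w₀) := by
  obtain ⟨num, den, h⟩ := hf
  refine ⟨num.linear - den.linear.smulRight (f w₀), fun z hz ↦ ⟨den z, (h z hz).1, ?_⟩⟩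
  calc (num.linear - den.linear.smulRight (f w₀)) (z - w₀)
      = (num z - num w₀) - (den z - den w₀) • f w₀ := by
        rw [LinearMap.sub_apply, LinearMap.smulRight_apply]
        simp only [← vsub_eq_sub, AffineMap.linearMap_vsub]
    _ = den z • (f z - f w₀) := by
        rw [← (h z hz).2, ← (h w₀ hw₀).2]
        module

end IsLinearFractionalOn

theorem map_vectorSpan_of_sub_eq_smul {f : E → E'} {N : E →ₗ[𝕜] E'} {W : Set E} {w₀ : E}
    (hw₀ : w₀ ∈ W) (hN : ∀ w ∈ W, ∃ c : 𝕜, c ≠ 0 ∧ N (w - w₀) = c • (f w - f w₀)) :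
    (vectorSpan 𝕜 W).map N = vectorSpan 𝕜 (f '' W) := by
  have mem_iff (p : Submodule 𝕜 E') (w : E) (hw : w ∈ W) : N (w - w₀) ∈ p ↔ f w - f w₀ ∈ p := by
    obtain ⟨c, hc, h⟩ := hN w hw
    rw [h, p.smul_mem_iff hc]
  refine eq_of_forall_ge_iff fun p ↦ ?_
  rw [vectorSpan_eq_span_vsub_set_right 𝕜 hw₀,
    vectorSpan_eq_span_vsub_set_right 𝕜 (mem_image_of_mem f hw₀), Submodule.map_span_le,
    Submodule.span_le]
  simpa [Set.subset_def] using forall₂_congr (mem_iff p)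

end Field

variable [NontriviallyNormedField 𝕜] [AddCommGroup E] [Module 𝕜 E] [TopologicalSpace E]
  [ContinuousAdd E] [ContinuousSMul 𝕜 E] [AddCommGroup E'] [Module 𝕜 E']

variable (𝕜) in
theorem exists_ne_zero_add_smul_mem {s : Set E} {x : E} (hs : s ∈ 𝓝 x) (v : E) :
    ∃ t : 𝕜, t ≠ 0 ∧ x + t • v ∈ s := by
  have hline : Filter.Tendsto (fun t : 𝕜 ↦ x + t • v) (𝓝 0) (𝓝 x) :=
    Continuous.tendsto' (by fun_prop) 0 x (by simp)
  have hmem : ∀ᶠ t : 𝕜 in 𝓝[≠] 0, x + t • v ∈ s :=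
    (hline.eventually_mem hs).filter_mono nhdsWithin_le_nhds
  exact (eventually_mem_nhdsWithin.and hmem).exists

theorem injective_of_sub_eq_smul {f : E → E'} {N : E →ₗ[𝕜] E'} {s : Set E} {w₀ : E}
    (hs : s ∈ 𝓝 w₀) (hf : InjOn f s)
    (hN : ∀ z ∈ s, ∃ c : 𝕜, c ≠ 0 ∧ N (z - w₀) = c • (f z - f w₀)) : Function.Injective N := by
  rw [injective_iff_map_eq_zero]
  intro v hv
  obtain ⟨t, ht, hmem⟩ := exists_ne_zero_add_smul_mem 𝕜 hs v
  obtain ⟨c, hc, h⟩ := hN _ hmem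
  have hfeq : f (w₀ + t • v) = f w₀ := by
    simpa [hv, hc, sub_eq_zero, eq_comm] using h
  simpa [ht] using hf hmem (mem_of_mem_nhds hs) hfeq

namespace IsLinearFractionalOn

variable {f : E → E'} {s W : Set E}

theorem exists_injective_linearMap (hf : IsLinearFractionalOn 𝕜 f s) (hs : IsOpen s)
    (hinj : InjOn f s) {w₀ : E} (hw₀ : w₀ ∈ s) :
    ∃ N : E →ₗ[𝕜] E', Function.Injective N ∧
      ∀ z ∈ s, ∃ c : 𝕜, c ≠ 0 ∧ N (z - w₀) = c • (f z - f w₀) := by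
  obtain ⟨N, hN⟩ := hf.exists_linearMap_sub_eq_smul hw₀
  exact ⟨N, injective_of_sub_eq_smul (hs.mem_nhds hw₀) hinj hN, hN⟩

theorem map_mem_affineSpan_image_iff (hf : IsLinearFractionalOn 𝕜 f s) (hs : IsOpen s)
    (hinj : InjOn f s) (hW : W ⊆ s) {z : E} (hz : z ∈ s) :
    f z ∈ affineSpan 𝕜 (f '' W) ↔ z ∈ affineSpan 𝕜 W := by
  obtain rfl | ⟨w₀, hw₀⟩ := W.eq_empty_or_nonempty
  · rw [image_empty, AffineSubspace.span_empty, AffineSubspace.span_empty]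
    exact iff_of_false (AffineSubspace.notMem_bot 𝕜 E' _) (AffineSubspace.notMem_bot 𝕜 E _)
  obtain ⟨N, hNinj, hN⟩ := hf.exists_injective_linearMap hs hinj (hW hw₀)
  obtain ⟨c, hc, hcz⟩ := hN z hz
  calc f z ∈ affineSpan 𝕜 (f '' W)
      ↔ f z - f w₀ ∈ vectorSpan 𝕜 (f '' W) := by
        rw [← direction_affineSpan, ← vsub_eq_sub, AffineSubspace.vsub_right_mem_direction_iff_mem
          (mem_affineSpan 𝕜 (mem_image_of_mem f hw₀))]
    _ ↔ N (z - w₀) ∈ (vectorSpan 𝕜 W).map N := by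
        rw [map_vectorSpan_of_sub_eq_smul hw₀ fun w hw ↦ hN w (hW hw), hcz,
          Submodule.smul_mem_iff _ hc]
    _ ↔ z - w₀ ∈ vectorSpan 𝕜 W := hNinj.mem_set_image
    _ ↔ z ∈ affineSpan 𝕜 W := by
        rw [← direction_affineSpan, ← vsub_eq_sub,
          AffineSubspace.vsub_right_mem_direction_iff_mem (mem_affineSpan 𝕜 hw₀)]

theorem image_affineSpan_inter (hf : IsLinearFractionalOn 𝕜 f s) (hs : IsOpen s)
    (hinj : InjOn f s) (hW : W ⊆ s) :
    f '' ((affineSpan 𝕜 W : Set E) ∩ s) = (affineSpan 𝕜 (f '' W) : Set E') ∩ f '' s := by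
  rw [← image_preimage_inter]
  congr 1
  ext z
  exact and_congr_left fun hz ↦ (hf.map_mem_affineSpan_image_iff hs hinj hW hz).symm

theorem nonempty_direction_equiv (hf : IsLinearFractionalOn 𝕜 f s) (hs : IsOpen s)
    (hinj : InjOn f s) (hW : W ⊆ s) :
    Nonempty ((affineSpan 𝕜 (f '' W)).direction ≃ₗ[𝕜] (affineSpan 𝕜 W).direction) := by
  rw [direction_affineSpan, direction_affineSpan]
  obtain rfl | ⟨w₀, hw₀⟩ := W.eq_empty_or_nonempty
  · rw [image_empty, vectorSpan_empty, vectorSpan_empty]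
    exact ⟨0⟩
  obtain ⟨N, hNinj, hN⟩ := hf.exists_injective_linearMap hs hinj (hW hw₀)
  rw [← map_vectorSpan_of_sub_eq_smul hw₀ fun w hw ↦ hN w (hW hw)]
  exact ⟨(Submodule.equivMapOfInjective N hNinj _).symm⟩

end IsLinearFractionalOn

end LinearFractional

section Mobius

variable (𝕜 : Type*) {E : Type*} [RCLike 𝕜] [NormedAddCommGroup E] {b z : E}

/-- The scalar `√(1 - ‖b‖²)` by which the linear part of the Möbius involution `mobius 𝕜 b`
contracts the orthogonal complement of `b`. -/
noncomputable def mobiusScale (b : E) : ℝ := √(1 - ‖b‖ ^ 2)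

theorem mobiusScale_pos (hb : ‖b‖ < 1) : 0 < mobiusScale b :=
  Real.sqrt_pos.mpr (by nlinarith [norm_nonneg b])

theorem mobiusScale_sq (hb : ‖b‖ < 1) : mobiusScale b ^ 2 = 1 - ‖b‖ ^ 2 :=
  Real.sq_sqrt (by nlinarith [norm_nonneg b])

theorem one_add_mobiusScale_ne_zero (b : E) : (1 + mobiusScale b : 𝕜) ≠ 0 := by
  have h : 0 < 1 + mobiusScale b := add_pos_of_pos_of_nonneg one_pos (Real.sqrt_nonneg _)
  exact_mod_cast h.ne'

variable [InnerProductSpace 𝕜 E]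

/-- The linear part `P + s Q` of the Möbius involution `mobius 𝕜 b`, where `P` and `Q` are the
orthogonal projections onto the line of `b` and its complement and `s = mobiusScale b`. Since
`(1 - s) / ‖b‖² = 1 / (1 + s)`, it can be written without dividing by `‖b‖²`, so that `b = 0` needs
no separate treatment. -/
noncomputable def mobiusLinear (b : E) : E →L[𝕜] E :=
  (mobiusScale b : 𝕜) • ContinuousLinearMap.id 𝕜 E +
    (1 + mobiusScale b : 𝕜)⁻¹ • (innerSL 𝕜 b).smulRight b

/-- The Möbius involution of the unit ball exchanging `0` and `b`. -/
noncomputable def mobius (b z : E) : E := (1 - inner 𝕜 b z)⁻¹ • (b - mobiusLinear 𝕜 b z)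

theorem inner_self_eq_one_sub_mobiusScale_sq (hb : ‖b‖ < 1) :
    inner 𝕜 b b = (1 - mobiusScale b ^ 2 : 𝕜) := by
  rw [inner_self_eq_norm_sq_to_K]
  have h : ‖b‖ ^ 2 = 1 - mobiusScale b ^ 2 := by linarith [mobiusScale_sq hb]
  exact_mod_cast congrArg (RCLike.ofReal (K := 𝕜)) h

theorem one_sub_inner_ne_zero (hb : ‖b‖ < 1) (hz : ‖z‖ < 1) : (1 - inner 𝕜 b z : 𝕜) ≠ 0 := by
  intro h
  have hle : ‖(1 : 𝕜)‖ ≤ ‖b‖ * ‖z‖ := sub_eq_zero.mp h ▸ norm_inner_le_norm b z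
  rw [norm_one] at hle
  nlinarith [norm_nonneg b, norm_nonneg z]

theorem mobiusLinear_apply (b z : E) :
    mobiusLinear 𝕜 b z =
      (mobiusScale b : 𝕜) • z + ((1 + mobiusScale b : 𝕜)⁻¹ * inner 𝕜 b z) • b := by
  simp [mobiusLinear, smul_smul]

theorem mobiusLinear_self (hb : ‖b‖ < 1) : mobiusLinear 𝕜 b b = b := by
  have hs := one_add_mobiusScale_ne_zero 𝕜 b
  rw [mobiusLinear_apply, inner_self_eq_one_sub_mobiusScale_sq 𝕜 hb]
  match_scalars
  field_simp
  ring

theorem isSymmetric_mobiusLinear (b : E) : (mobiusLinear 𝕜 b : E →ₗ[𝕜] E).IsSymmetric := by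
  intro x y
  simp only [ContinuousLinearMap.coe_coe, mobiusLinear_apply, inner_add_left, inner_add_right,
    inner_smul_left, inner_smul_right, map_mul, map_inv₀, map_add, map_one, RCLike.conj_ofReal,
    inner_conj_symm]
  ring

theorem inner_mobiusLinear (hb : ‖b‖ < 1) (z : E) :
    inner 𝕜 b (mobiusLinear 𝕜 b z) = inner 𝕜 b z := by
  have h := isSymmetric_mobiusLinear 𝕜 b b z
  rwa [ContinuousLinearMap.coe_coe, mobiusLinear_self 𝕜 hb, eq_comm] at h

theorem mobiusLinear_mobiusLinear (hb : ‖b‖ < 1) (z : E) :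
    mobiusLinear 𝕜 b (mobiusLinear 𝕜 b z) = (mobiusScale b ^ 2 : 𝕜) • z + inner 𝕜 b z • b := by
  have hs := one_add_mobiusScale_ne_zero 𝕜 b
  rw [mobiusLinear_apply, inner_mobiusLinear 𝕜 hb, mobiusLinear_apply]
  match_scalars
  · ring
  · field_simp
    ring

theorem norm_mobiusLinear_sq (hb : ‖b‖ < 1) (z : E) :
    ‖mobiusLinear 𝕜 b z‖ ^ 2 = mobiusScale b ^ 2 * ‖z‖ ^ 2 + ‖(inner 𝕜 b z : 𝕜)‖ ^ 2 := by
  have h : inner 𝕜 (mobiusLinear 𝕜 b z) (mobiusLinear 𝕜 b z) =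
      (mobiusScale b ^ 2 : 𝕜) * ‖z‖ ^ 2 + ‖(inner 𝕜 b z : 𝕜)‖ ^ 2 := by
    calc inner 𝕜 (mobiusLinear 𝕜 b z) (mobiusLinear 𝕜 b z)
        = inner 𝕜 z (mobiusLinear 𝕜 b (mobiusLinear 𝕜 b z)) :=
          isSymmetric_mobiusLinear 𝕜 b z (mobiusLinear 𝕜 b z)
      _ = (mobiusScale b ^ 2 : 𝕜) * inner 𝕜 z z + inner 𝕜 b z * inner 𝕜 z b := by
          rw [mobiusLinear_mobiusLinear 𝕜 hb, inner_add_right, inner_smul_right, inner_smul_right]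
      _ = _ := by
          rw [inner_self_eq_norm_sq_to_K, ← inner_conj_symm z b, RCLike.mul_conj]
  rw [inner_self_eq_norm_sq_to_K] at h
  exact_mod_cast h

theorem norm_sub_mobiusLinear_sq (hb : ‖b‖ < 1) (z : E) :
    ‖b - mobiusLinear 𝕜 b z‖ ^ 2 =
      ‖(1 - inner 𝕜 b z : 𝕜)‖ ^ 2 - mobiusScale b ^ 2 * (1 - ‖z‖ ^ 2) := by
  rw [norm_sub_sq (𝕜 := 𝕜), norm_sub_sq (𝕜 := 𝕜), inner_mobiusLinear 𝕜 hb,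
    norm_mobiusLinear_sq 𝕜 hb, norm_one, RCLike.inner_apply, map_one, mul_one]
  linear_combination mobiusScale_sq hb

theorem norm_mobius_lt_one (hb : ‖b‖ < 1) (hz : ‖z‖ < 1) : ‖mobius 𝕜 b z‖ < 1 := by
  have hden : 0 < ‖(1 - inner 𝕜 b z : 𝕜)‖ := norm_pos_iff.mpr (one_sub_inner_ne_zero 𝕜 hb hz)
  have hgap : 0 < mobiusScale b ^ 2 * (1 - ‖z‖ ^ 2) :=
    mul_pos (pow_pos (mobiusScale_pos hb) 2) (by nlinarith [norm_nonneg z])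
  rw [mobius, norm_smul, norm_inv, inv_mul_lt_one₀ hden]
  refine lt_of_pow_lt_pow_left₀ 2 hden.le ?_
  rw [norm_sub_mobiusLinear_sq 𝕜 hb]
  exact sub_lt_self _ hgap

theorem mobius_zero (b : E) : mobius 𝕜 b 0 = b := by
  simp [mobius]

theorem one_sub_inner_mobius (hb : ‖b‖ < 1) (hz : ‖z‖ < 1) :
    1 - inner 𝕜 b (mobius 𝕜 b z) = (mobiusScale b ^ 2 / (1 - inner 𝕜 b z) : 𝕜) := by
  have hden := one_sub_inner_ne_zero 𝕜 hb hz
  rw [mobius, inner_smul_right, inner_sub_right, inner_mobiusLinear 𝕜 hb,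
    inner_self_eq_one_sub_mobiusScale_sq 𝕜 hb]
  field_simp
  ring

theorem sub_mobiusLinear_mobius (hb : ‖b‖ < 1) (hz : ‖z‖ < 1) :
    b - mobiusLinear 𝕜 b (mobius 𝕜 b z) = (mobiusScale b ^ 2 / (1 - inner 𝕜 b z) : 𝕜) • z := by
  have hden := one_sub_inner_ne_zero 𝕜 hb hz
  rw [mobius, map_smul, map_sub, mobiusLinear_self 𝕜 hb, mobiusLinear_mobiusLinear 𝕜 hb]
  match_scalars
  · field_simp
    ring
  · field_simp

theorem mobius_mobius (hb : ‖b‖ < 1) (hz : ‖z‖ < 1) : mobius 𝕜 b (mobius 𝕜 b z) = z := by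
  have hscale : (mobiusScale b ^ 2 / (1 - inner 𝕜 b z) : 𝕜) ≠ 0 :=
    div_ne_zero (pow_ne_zero 2 (RCLike.ofReal_ne_zero.mpr (mobiusScale_pos hb).ne'))
      (one_sub_inner_ne_zero 𝕜 hb hz)
  rw [mobius, one_sub_inner_mobius 𝕜 hb hz, sub_mobiusLinear_mobius 𝕜 hb hz,
    inv_smul_smul₀ hscale]

theorem mobius_self (hb : ‖b‖ < 1) : mobius 𝕜 b b = 0 := by
  simpa [mobius_zero] using mobius_mobius 𝕜 hb (z := 0) (by simp)

theorem differentiableOn_mobius (hb : ‖b‖ < 1) : DifferentiableOn 𝕜 (mobius 𝕜 b) (ball 0 1) := by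
  have hinner : DifferentiableOn 𝕜 (fun z ↦ (inner 𝕜 b z : 𝕜)) (ball 0 1) :=
    (innerSL 𝕜 b).differentiableOn
  refine DifferentiableOn.smul (DifferentiableOn.inv (by fun_prop) fun z hz ↦ ?_) (by fun_prop)
  exact one_sub_inner_ne_zero 𝕜 hb (mem_ball_zero_iff.mp hz)

theorem isLinearFractionalOn_mobius (hb : ‖b‖ < 1) :
    IsLinearFractionalOn 𝕜 (mobius 𝕜 b) (ball 0 1) := by
  refine ⟨AffineMap.const 𝕜 E b - (mobiusLinear 𝕜 b : E →ₗ[𝕜] E).toAffineMap,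
    AffineMap.const 𝕜 E 1 - (innerSL 𝕜 b : E →ₗ[𝕜] 𝕜).toAffineMap, fun z hz ↦ ?_⟩
  have hden := one_sub_inner_ne_zero 𝕜 hb (mem_ball_zero_iff.mp hz)
  exact ⟨hden, smul_inv_smul₀ hden _⟩

end Mobius

section Biholomorphism

variable {E E' E'' : Type*} [NormedAddCommGroup E] [NormedSpace ℂ E]
  [NormedAddCommGroup E'] [NormedSpace ℂ E'] [NormedAddCommGroup E''] [NormedSpace ℂ E'']

/-- `F` restricts to a biholomorphism from the open unit ball of `E` onto that of `E'`, with
inverse `G`. The values of `F` and `G` outside the balls are irrelevant. -/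
structure IsBallBiholomorphism (F : E → E') (G : E' → E) : Prop where
  differentiableOn : DifferentiableOn ℂ F (ball 0 1)
  differentiableOn_inv : DifferentiableOn ℂ G (ball 0 1)
  mapsTo : MapsTo F (ball 0 1) (ball 0 1)
  mapsTo_inv : MapsTo G (ball 0 1) (ball 0 1)
  invOn : InvOn G F (ball 0 1) (ball 0 1)

theorem eq_fderiv_zero_of_norm_eq [StrictConvexSpace ℝ E'] {F : E → E'}
    (hF : DifferentiableOn ℂ F (ball 0 1)) (hmaps : MapsTo F (ball 0 1) (closedBall 0 1))
    (h0 : F 0 = 0) {w : E} (hw : w ∈ ball 0 1) (hnorm : ‖F w‖ = ‖w‖) :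
    F w = fderiv ℂ F 0 w := by
  obtain rfl | hw0 := eq_or_ne w 0
  · simp [h0]
  have hwpos : 0 < ‖w‖ := norm_pos_iff.mpr hw0
  set f : ℂ → E' := fun t ↦ F (t • w) with hf
  have hline : MapsTo (fun t : ℂ ↦ t • w) (ball 0 (1 / ‖w‖)) (ball 0 1) := by
    intro t ht
    rw [mem_ball_zero_iff] at ht ⊢
    rwa [norm_smul, ← lt_div_iff₀ hwpos]
  have hf0 : f 0 = 0 := by simp [hf, h0]
  have hdslope : dslope f 0 1 = F w := by
    rw [dslope_of_ne _ one_ne_zero, slope_def_module, hf0]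
    simp [hf]
  have hone : (1 : ℂ) ∈ ball (0 : ℂ) (1 / ‖w‖) := by
    rw [mem_ball_zero_iff, norm_one, one_lt_div hwpos]
    exact mem_ball_zero_iff.mp hw
  have hlinear : EqOn f (fun t ↦ t • F w) (ball 0 (1 / ‖w‖)) := by
    have hfdiff : DifferentiableOn ℂ f (ball 0 (1 / ‖w‖)) := hF.comp (by fun_prop) hline
    have h := Complex.affine_of_mapsTo_ball_of_norm_dslope_eq_div (R₂ := 1) hfdiff
      (hf0.symm ▸ hmaps.comp hline) hone (by rw [hdslope, hnorm, one_div_one_div])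
    simpa only [hf0, hdslope, sub_zero, zero_add] using h
  have hderiv : HasLineDerivAt ℂ F (F w) 0 w := by
    have h : HasDerivAt (fun t : ℂ ↦ t • F w) (F w) 0 := by
      simpa using (hasDerivAt_id (0 : ℂ)).smul_const (F w)
    refine h.congr_of_eventuallyEq ?_
    filter_upwards [ball_mem_nhds 0 (by positivity : 0 < 1 / ‖w‖)] with t ht
    simpa only [zero_add] using hlinear ht
  have hdiff : DifferentiableAt ℂ F 0 := hF.differentiableAt (ball_mem_nhds 0 one_pos)
  exact hderiv.unique (hdiff.hasFDerivAt.hasLineDerivAt w)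

namespace IsBallBiholomorphism

variable {F : E → E'} {G : E' → E}

theorem of_image_ball (hF : DifferentiableOn ℂ F (ball 0 1)) (hG : DifferentiableOn ℂ G (ball 0 1))
    (himage : F '' ball 0 1 = ball 0 1) (hinv : LeftInvOn G F (ball 0 1)) :
    IsBallBiholomorphism F G where
  differentiableOn := hF
  differentiableOn_inv := hG
  mapsTo := mapsTo_iff_image_subset.mpr himage.subset
  mapsTo_inv := by rw [mapsTo_iff_image_subset, ← himage, hinv.image_image]
  invOn := ⟨hinv, himage ▸ hinv.rightInvOn_image⟩

theorem comp {F' : E' → E''} {G' : E'' → E'} (hF' : IsBallBiholomorphism F' G')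
    (hF : IsBallBiholomorphism F G) : IsBallBiholomorphism (F' ∘ F) (G ∘ G') where
  differentiableOn := hF'.differentiableOn.comp hF.differentiableOn hF.mapsTo
  differentiableOn_inv := hF.differentiableOn_inv.comp hF'.differentiableOn_inv hF'.mapsTo_inv
  mapsTo := hF'.mapsTo.comp hF.mapsTo
  mapsTo_inv := hF.mapsTo_inv.comp hF'.mapsTo_inv
  invOn := hF.invOn.comp hF'.invOn hF.mapsTo hF'.mapsTo_inv

theorem bijOn (hF : IsBallBiholomorphism F G) : BijOn F (ball 0 1) (ball 0 1) :=
  hF.invOn.bijOn hF.mapsTo hF.mapsTo_inv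

theorem norm_map (hF : IsBallBiholomorphism F G) (h0 : F 0 = 0) {z : E} (hz : z ∈ ball 0 1) :
    ‖F z‖ = ‖z‖ := by
  have hG0 : G 0 = 0 := by simpa [h0] using hF.invOn.1 (mem_ball_self one_pos)
  refine le_antisymm ?_ ?_
  · exact Complex.norm_le_norm_of_mapsTo_ball hF.differentiableOn
      (hF.mapsTo.mono_right ball_subset_closedBall) h0 (mem_ball_zero_iff.mp hz)
  · simpa [hF.invOn.1 hz] using Complex.norm_le_norm_of_mapsTo_ball hF.differentiableOn_inv
      (hF.mapsTo_inv.mono_right ball_subset_closedBall) hG0 (mem_ball_zero_iff.mp (hF.mapsTo hz))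

theorem eqOn_fderiv [StrictConvexSpace ℝ E'] (hF : IsBallBiholomorphism F G) (h0 : F 0 = 0) :
    EqOn F (fderiv ℂ F 0) (ball 0 1) := fun _ hz ↦
  eq_fderiv_zero_of_norm_eq hF.differentiableOn (hF.mapsTo.mono_right ball_subset_closedBall) h0 hz
    (hF.norm_map h0 hz)

end IsBallBiholomorphism

end Biholomorphism

section InnerProductSpace

variable {E E' : Type*} [NormedAddCommGroup E] [NormedSpace ℂ E]
  [NormedAddCommGroup E'] [InnerProductSpace ℂ E']

theorem isBallBiholomorphism_mobius {b : E'} (hb : ‖b‖ < 1) :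
    IsBallBiholomorphism (mobius ℂ b) (mobius ℂ b) := by
  have hmaps : MapsTo (mobius ℂ b) (ball 0 1) (ball 0 1) := fun z hz ↦
    mem_ball_zero_iff.mpr (norm_mobius_lt_one ℂ hb (mem_ball_zero_iff.mp hz))
  have hinv : LeftInvOn (mobius ℂ b) (mobius ℂ b) (ball 0 1) := fun z hz ↦
    mobius_mobius ℂ hb (mem_ball_zero_iff.mp hz)
  exact ⟨differentiableOn_mobius ℂ hb, differentiableOn_mobius ℂ hb, hmaps, hmaps, hinv, hinv⟩

theorem IsBallBiholomorphism.isLinearFractionalOn {F : E → E'} {G : E' → E}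
    (hF : IsBallBiholomorphism F G) : IsLinearFractionalOn ℂ F (ball 0 1) := by
  have : StrictConvexSpace ℝ E' := by
    let := InnerProductSpace.rclikeToReal ℂ E'
    infer_instance
  have hb : ‖F 0‖ < 1 := mem_ball_zero_iff.mp (hF.mapsTo (mem_ball_self one_pos))
  have hφ : IsBallBiholomorphism (mobius ℂ (F 0)) (mobius ℂ (F 0)) := isBallBiholomorphism_mobius hb
  have hφF := hφ.comp hF
  set L : E →L[ℂ] E' := fderiv ℂ (mobius ℂ (F 0) ∘ F) 0
  have hL : EqOn (mobius ℂ (F 0) ∘ F) L (ball 0 1) := hφF.eqOn_fderiv (mobius_self ℂ hb)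
  have hFL : EqOn (mobius ℂ (F 0) ∘ L) F (ball 0 1) := fun z hz ↦ by
    rw [Function.comp_apply, ← hL hz]
    exact hφ.invOn.1 (hF.mapsTo hz)
  exact ((isLinearFractionalOn_mobius ℂ hb).comp_affineMap (L : E →ₗ[ℂ] E').toAffineMap
    (hφF.mapsTo.congr hL)).congr hFL

theorem ballAutomorphism_affineSpan_general {F : E → E'} {G : E' → E}
    (hF : IsBallBiholomorphism F G) {W : Set E} (hW : W ⊆ ball 0 1) :
    F '' ((affineSpan ℂ W : Set E) ∩ ball 0 1) = (affineSpan ℂ (F '' W) : Set E') ∩ ball 0 1 ∧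
      Nonempty ((affineSpan ℂ (F '' W)).direction ≃ₗ[ℂ] (affineSpan ℂ W).direction) := by
  have hfrac := hF.isLinearFractionalOn
  have himage := hfrac.image_affineSpan_inter isOpen_ball hF.bijOn.injOn hW
  rw [hF.bijOn.image_eq] at himage
  exact ⟨himage, hfrac.nonempty_direction_equiv isOpen_ball hF.bijOn.injOn hW⟩

end InnerProductSpace

/-- An automorphism of the open unit ball of `ℂ^d` maps intersections of affine hulls with
the ball onto each other, and preserves the dimension (hence the codimension) of affine
hulls. -/
theorem ballAutomorphism_affineSpan (d : ℕ) (hd : 0 < d)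
    (V W : Set (EuclideanSpace ℂ (Fin d)))
    (hV : V ⊆ ball (0 : EuclideanSpace ℂ (Fin d)) 1)
    (hW : W ⊆ ball (0 : EuclideanSpace ℂ (Fin d)) 1)
    (F Finv : EuclideanSpace ℂ (Fin d) → EuclideanSpace ℂ (Fin d))
    (hF : DifferentiableOn ℂ F (ball 0 1)) (hFinv : DifferentiableOn ℂ Finv (ball 0 1))
    (hFball : F '' ball 0 1 = ball 0 1)
    (hFinvF : ∀ z ∈ ball (0 : EuclideanSpace ℂ (Fin d)) 1, Finv (F z) = z)
    (hFFinv : ∀ z ∈ ball (0 : EuclideanSpace ℂ (Fin d)) 1, F (Finv z) = z)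
    (hFW : F '' W = V) :
    F '' ((affineSpan ℂ W : Set (EuclideanSpace ℂ (Fin d))) ∩ ball 0 1) =
      (affineSpan ℂ V : Set (EuclideanSpace ℂ (Fin d))) ∩ ball 0 1 ∧
    Module.finrank ℂ (affineSpan ℂ V).direction =
      Module.finrank ℂ (affineSpan ℂ W).direction ∧
    d - Module.finrank ℂ (affineSpan ℂ V).direction =
      d - Module.finrank ℂ (affineSpan ℂ W).direction := by
  subst hFW
  obtain ⟨himage, ⟨e⟩⟩ :=
    ballAutomorphism_affineSpan_general (.of_image_ball hF hFinv hFball hFinvF) hW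
  exact ⟨himage, e.finrank_eq, by rw [e.finrank_eq]⟩
end
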